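/- Let f : 𝓔_∞ → 𝓔_∞ be a Borel map. Then there exists a Ramsey conull set 𝓒 ⊆ 𝓔_∞ such that f is tracial on 𝓒, i.e., for every B ∈ 𝓒 there is n₀ ∈ ℕ such that for all n ≥ n₀ and all A, A' ≤ B for which there exist k ∈ ℕ and s ∈ 𝓔_∞^fin with s = r_k(A) = r_k(A') and dom(s) = {0,…,μ_n(B)−1}, one has tr(f(A), B, n) = tr(f(A'), B, n). -/

import Mathlib

open Classical

/-- The space `𝓔_∞` of equivalence relations on `ℕ` with infinitely many classes
(infinite partitions of `ℕ`). -/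
def Einf : Type := {A : Setoid ℕ // Infinite (Quotient A)}

namespace Einf

/-- `Coarsen A B` (written `A ≤ B` in the paper): `A` is a coarsening of `B`,
i.e. every `A`-class is a union of `B`-classes. -/
def Coarsen (A B : Einf) : Prop := ∀ i j : ℕ, B.1 i j → A.1 i j

/-- `μ_n(A)`: the `(n+1)`-st smallest minimal representative of an `A`-class. -/
noncomputable def mu (A : Einf) (n : ℕ) : ℕ :=
  Nat.nth (fun k => ∀ m, A.1 m k → k ≤ m) n

/-- `𝓔_∞^fin`: equivalence relations on initial segments `{0,…,k−1}` of `ℕ`. -/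
def FinApprox : Type := Σ k : ℕ, Setoid (Fin k)

/-- `r_n(A)`: the restriction of `A` to `{0,…,μ_n(A)−1}`. -/
noncomputable def rn (A : Einf) (n : ℕ) : FinApprox :=
  ⟨A.mu n, Setoid.comap (fun i => (i : ℕ)) A.1⟩

/-- `s ⊑ A`: `s` is an initial approximation of `A`, i.e. `s = r_n(A)` for some `n`. -/
def InitSeg (s : FinApprox) (A : Einf) : Prop := ∃ n, rn A n = s

/-- The Ellentuck cube `[s, A] = {B ∈ 𝓔_∞ : s ⊑ B and B ≤ A}`. -/
def cube (s : FinApprox) (A : Einf) : Set Einf := {B | InitSeg s B ∧ Coarsen B A}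

/-- The identification of `𝓔_∞` with `𝓒𝓢 ⊆ 2^{ℕ×ℕ}`: `toCS A n m = 1` iff
`m` is `A`-equivalent to `μ_n(A)` (so the `n`-th row is the `A`-class of `μ_n(A)`). -/
noncomputable def toCS (A : Einf) : ℕ → ℕ → Bool :=
  fun n m => decide (A.1 m (A.mu n))

/-- The Borel structure of the Polish topology on `𝓔_∞`, pulled back from `2^{ℕ×ℕ}`. -/
noncomputable instance : MeasurableSpace Einf :=
  MeasurableSpace.comap toCS inferInstance

/-- `𝓧 ⊆ 𝓔_∞` is Ramsey null. -/
def RamseyNull (X : Set Einf) : Prop :=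
  ∀ s A, (cube s A).Nonempty → ∃ B ∈ cube s A, cube s B ∩ X = ∅

/-- `𝓧 ⊆ 𝓔_∞` is Ramsey conull: its complement is Ramsey null. -/
def RamseyConull (X : Set Einf) : Prop := RamseyNull Xᶜ

end Einf

open Einf

/-- The trace `tr(A, B, n)` of `A` in `B` at `n`: the restriction of the equivalence
relation `A` to the finite set `{0, 1, …, μ_n(B) − 1}`. -/
noncomputable def Einf.trace (A B : Einf) (n : ℕ) : Setoid (Fin (B.mu n)) :=
  Setoid.comap (fun i => (i : ℕ)) A.1

/-!
Call a property of cubes `[s, B]` dense if every cube `[s, A]` has a subcube `[s, B]`, `B ∈ [s, A]`,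
with the property. There are only finitely many approximations with a given domain, so dense
properties that pass to subsets can be fused: some `B ∈ [s, A]` has them for all nonempty `[t, B]`
with `dom s ⊆ dom t` simultaneously.

For every finite colouring of approximations it is dense that all `D ∈ [s, B]`, `s = r_q(D)`, have
`r_{q+1}(D)` of the same colour. Indeed these approximations correspond to substitution instances
of an infinite variable word, and this is the Carlson–Simpson theorem, which follows from the
existence of suitable idempotent ultrafilters on words. Galvin–Prikry forcing then shows that open
sets are Ramsey, and fusion that the Ramsey sets form a σ-algebra, which therefore contains the
Borel sets.

If `f` is Borel, it is hence dense that `[s, B]` decides the finitely many relations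
`i ~ j` in `f(D)` with `i, j ∈ dom s`, that is, that `f(D)` restricted to `dom s` does not depend on
`D ∈ [s, B]`. A `B` obtained by fusing these properties is tracial, and so are its coarsenings.
-/

/-! ### Carlson–Simpson theorem -/

theorem exists_dependent_seq {α : ℕ → Type*} {R : ∀ n, α n → α (n + 1) → Prop} (x₀ : α 0)
    (h : ∀ n x, ∃ y, R n x y) : ∃ X : ∀ n, α n, X 0 = x₀ ∧ ∀ n, R n (X n) (X (n + 1)) := by
  choose next hnext using h
  exact ⟨fun n => Nat.rec x₀ next n, rfl, fun n => hnext n _⟩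

theorem exists_forall_eq_map_range {α : Type*} {X : ℕ → List α}
    (hprefix : ∀ n, X n <+: X (n + 1)) (hlength : StrictMono fun n => (X n).length) :
    ∃ W : ℕ → α, ∀ n, X n = (List.range (X n).length).map W := by
  have hle : ∀ {m n}, m ≤ n → X m <+: X n := fun {m n} h => by
    induction n, h using Nat.le_induction with
    | base => exact List.prefix_rfl
    | succ n _ ih => exact ih.trans (hprefix n)
  have hlt : ∀ i, i < (X (i + 1)).length := fun i => hlength.le_apply
  refine ⟨fun i => (X (i + 1))[i]'(hlt i), fun n => List.ext_getElem (by simp) fun i hi _ => ?_⟩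
  rw [List.getElem_map, List.getElem_range]
  rcases le_total n (i + 1) with h | h
  · exact (hle h).getElem hi
  · exact ((hle h).getElem (hlt i)).symm

section ClosedLeftIdeals

variable {S : Type*} [TopologicalSpace S]

/-- Nonempty closed left ideals of a semigroup carrying a topology. -/
structure IsClosedLeftIdeal [Mul S] (M : Set S) : Prop where
  isClosed : IsClosed M
  nonempty : M.Nonempty
  mul_mem : ∀ x, ∀ y ∈ M, x * y ∈ M

theorem IsClosedLeftIdeal.exists_minimal [Mul S] [Nonempty S] [CompactSpace S] :
    ∃ M : Set S, Minimal IsClosedLeftIdeal M := by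
  refine zorn_superset {M : Set S | IsClosedLeftIdeal M} fun c hc hchain => ?_
  have hclosed : ∀ M ∈ c, IsClosed M := fun M hM => (hc hM).isClosed
  refine ⟨⋂₀ c, ⟨isClosed_sInter hclosed, ?_, fun x y hy M hM => (hc hM).mul_mem x y (hy M hM)⟩,
    fun M hM => Set.sInter_subset_of_mem hM⟩
  rcases c.eq_empty_or_nonempty with rfl | hne
  · simp
  · have := hne.to_subtype
    exact IsCompact.nonempty_sInter_of_directed_nonempty_isCompact_isClosed
      (IsChain.directedOn hchain.symm)
      (fun M hM => (hc hM).nonempty) (fun M hM => (hclosed M hM).isCompact) hclosed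

theorem IsClosedLeftIdeal.image_mul_right_eq_of_minimal [Semigroup S] [CompactSpace S] [T2Space S]
    {M : Set S} (hM : Minimal IsClosedLeftIdeal M) (hmul : ∀ r : S, Continuous (· * r)) {y : S}
    (hy : y ∈ M) :
    (· * y) '' M = M := by
  refine hM.eq_of_subset ⟨(hmul y).isClosedMap _ hM.prop.isClosed, hM.prop.nonempty.image _, ?_⟩
    (Set.image_subset_iff.2 fun x _ => hM.prop.mul_mem x y hy)
  rintro x _ ⟨z, hz, rfl⟩
  exact ⟨x * z, hM.prop.mul_mem x z hz, mul_assoc x z y⟩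

theorem IsClosedLeftIdeal.mul_eq_left_of_minimal [Semigroup S] [CompactSpace S] [T2Space S]
    {M : Set S} (hM : Minimal IsClosedLeftIdeal M) (hmul : ∀ r : S, Continuous (· * r))
    {y e : S} (hy : y ∈ M) (he : e ∈ M) (hee : e * e = e) : y * e = y := by
  rw [← IsClosedLeftIdeal.image_mul_right_eq_of_minimal hM hmul he] at hy
  obtain ⟨x, -, rfl⟩ := hy
  simp only [mul_assoc, hee]

end ClosedLeftIdeals

section UltrafiltersOfWords

open Filter

attribute [local instance] Ultrafilter.mul Ultrafilter.semigroup

theorem ultrafilter_continuous_map {α β : Type*} (g : α → β) :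
    Continuous fun U : Ultrafilter α => U.map g :=
  ultrafilterBasis_is_basis.continuous_iff.2 <| Set.forall_mem_range.2 fun s =>
    ultrafilter_isOpen_basic (g ⁻¹' s)

theorem ultrafilter_map_mul {α β F : Type*} [Mul α] [Mul β] [FunLike F α β] [MulHomClass F α β]
    (g : F) (U V : Ultrafilter α) : (U * V).map g = U.map g * V.map g := by
  refine Ultrafilter.coe_inj.1 (Filter.ext' fun p => ?_)
  simp only [Ultrafilter.coe_map, eventually_map, Ultrafilter.eventually_mul, map_mul]

variable {L : Type*}

/-- Words over `Option L` are words over `L` in one variable `none`; this is the substitution of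
a letter for the variable. -/
def substLetter (a : L) : FreeMonoid (Option L) →* FreeMonoid L :=
  FreeMonoid.map (·.getD a)

theorem substLetter_map_some (a : L) (w : FreeMonoid L) :
    substLetter a (FreeMonoid.map some w) = w := by
  have h : (substLetter a).comp (FreeMonoid.map some) = MonoidHom.id (FreeMonoid L) := by
    ext; simp [substLetter]
  exact DFunLike.congr_fun h w

-- `V` is an idempotent among the ultrafilters on words starting with the variable all of whose
-- substitution instances lie in a fixed minimal closed left ideal; idempotents of that ideal are
-- right identities for its elements.
theorem exists_ultrafilter_map_substLetter_mul (L : Type*) :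
    ∃ V : Ultrafilter (FreeMonoid (Option L)),
      (∀ᶠ v in (V : Filter (FreeMonoid (Option L))), ∃ u, v = FreeMonoid.of none * u) ∧
      ∀ a b, V.map (substLetter a) * V.map (substLetter b) = V.map (substLetter a) := by
  obtain ⟨M, hM⟩ := IsClosedLeftIdeal.exists_minimal (S := Ultrafilter (FreeMonoid L))
  let R : Set (FreeMonoid (Option L)) := {v | ∃ u, v = FreeMonoid.of none * u}
  let T : Set (Ultrafilter (FreeMonoid (Option L))) :=
    {V | R ∈ V} ∩ ⋂ a : L, {V | V.map (substLetter a) ∈ M}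
  have mem_T : ∀ {V}, V ∈ T ↔ (∀ᶠ v in V, v ∈ R) ∧ ∀ a, V.map (substLetter a) ∈ M := by
    intro V; simp only [T, Set.mem_inter_iff, Set.mem_iInter]; rfl
  have hT_nonempty : T.Nonempty := by
    obtain ⟨W, hW⟩ := hM.prop.nonempty
    refine ⟨(pure (FreeMonoid.of none) : Ultrafilter _) * W.map (FreeMonoid.map some),
      mem_T.2 ⟨?_, fun a => ?_⟩⟩
    · simp [Ultrafilter.eventually_mul, R]
    · have h : substLetter a ∘ FreeMonoid.map some = id := funext (substLetter_map_some a)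
      rw [ultrafilter_map_mul, Ultrafilter.map_map, h, Ultrafilter.map_id]
      exact hM.prop.mul_mem _ _ hW
  have hT_closed : IsClosed T := (ultrafilter_isClosed_basic R).inter <|
    isClosed_iInter fun a => hM.prop.isClosed.preimage (ultrafilter_continuous_map _)
  have hT_mul : ∀ᵉ (U ∈ T) (V ∈ T), U * V ∈ T := by
    intro U hU V hV
    refine mem_T.2 ⟨?_, fun a => ?_⟩
    · rw [Ultrafilter.eventually_mul]
      filter_upwards [(mem_T.1 hU).1]
      rintro _ ⟨u, rfl⟩
      exact Eventually.of_forall fun v => ⟨u * v, mul_assoc _ _ _⟩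
    · rw [ultrafilter_map_mul]
      exact hM.prop.mul_mem _ _ ((mem_T.1 hV).2 a)
  obtain ⟨V, hV, hVV⟩ := exists_idempotent_in_compact_subsemigroup
    Ultrafilter.continuous_mul_left T hT_nonempty hT_closed.isCompact hT_mul
  obtain ⟨hVR, hVM⟩ := mem_T.1 hV
  refine ⟨V, hVR, fun a b => IsClosedLeftIdeal.mul_eq_left_of_minimal hM
    Ultrafilter.continuous_mul_left (hVM a) (hVM b) ?_⟩
  rw [← ultrafilter_map_mul, hVV]

/-- The words that have colour `e` and keep it, for almost all `v`, when `v` with any letter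
substituted for its variable is appended. -/
def stablyColoured {κ : Type*} (V : Ultrafilter (FreeMonoid (Option L))) (c : FreeMonoid L → κ)
    (e : κ) : Set (FreeMonoid L) :=
  {w | c w = e ∧ ∀ a, ∀ᶠ v in V, c (w * substLetter a v) = e}

theorem eventually_mul_substLetter_mem_stablyColoured [Finite L] {κ : Type*}
    {V : Ultrafilter (FreeMonoid (Option L))}
    (hV : ∀ a b, V.map (substLetter a) * V.map (substLetter b) = V.map (substLetter a))
    {c : FreeMonoid L → κ} {e : κ} {w : FreeMonoid L} (hw : w ∈ stablyColoured V c e) :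
    ∀ᶠ v in V, ∀ a, w * substLetter a v ∈ stablyColoured V c e := by
  refine eventually_all.2 fun a => (hw.2 a).and (eventually_all.2 fun b => ?_)
  have h : ∀ᶠ y in V.map (substLetter a), c (w * y) = e := hw.2 a
  rw [← hV a b, Ultrafilter.eventually_mul] at h
  simpa only [Ultrafilter.coe_map, eventually_map, mul_assoc] using h

theorem exists_mul_mem_stablyColoured [Finite L] [Nonempty L] {κ : Type*} [Finite κ]
    {V : Ultrafilter (FreeMonoid (Option L))}
    (hV : ∀ a b, V.map (substLetter a) * V.map (substLetter b) = V.map (substLetter a))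
    (c : FreeMonoid L → κ) (p : FreeMonoid L) : ∃ e w, p * w ∈ stablyColoured V c e := by
  obtain ⟨a₀⟩ := ‹Nonempty L›
  obtain ⟨e, he⟩ := Ultrafilter.eq_pure_of_finite ((V.map (substLetter a₀)).map fun w => c (p * w))
  have hcolour : ∀ᶠ w in V.map (substLetter a₀), c (p * w) = e := by
    have h : ∀ᶠ x in (V.map (substLetter a₀)).map fun w => c (p * w), x = e := by simp [he]
    exact h
  have hstable : ∀ᶠ w in V.map (substLetter a₀),
      ∀ a, ∀ᶠ v in V, c (p * w * substLetter a v) = e := by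
    refine eventually_all.2 fun a => ?_
    have h := hcolour
    rw [← hV a₀ a, Ultrafilter.eventually_mul] at h
    simpa only [Ultrafilter.coe_map, eventually_map, mul_assoc] using h
  exact ⟨e, (hcolour.and hstable).exists⟩

theorem exists_append_substLetter_mem [Finite L] [Nonempty L] {κ : Type*} [Finite κ]
    (c : List L → κ) (p : List L) :
    ∃ (e : κ) (P : Set (List L)), (∃ w, p ++ w ∈ P) ∧ (∀ w ∈ P, c w = e) ∧
      ∀ F : Set (List L), F.Finite → F ⊆ P →
        ∃ u : List (Option L), ∀ w ∈ F, ∀ a, w ++ a :: u.map (·.getD a) ∈ P := by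
  obtain ⟨V, hVnone, hV⟩ := exists_ultrafilter_map_substLetter_mul L
  obtain ⟨e, hne⟩ := exists_mul_mem_stablyColoured hV (fun w => c w.toList) (FreeMonoid.ofList p)
  refine ⟨e, stablyColoured V (fun w => c w.toList) e, hne, fun w hw => hw.1, fun F hF hFP => ?_⟩
  have h : ∀ᶠ v in V, ∀ w ∈ F, ∀ a,
      FreeMonoid.ofList w * substLetter a v ∈ stablyColoured V (fun w => c w.toList) e :=
    hF.eventually_all.2 fun w hw => eventually_mul_substLetter_mem_stablyColoured hV (hFP hw)
  obtain ⟨_, ⟨u, rfl⟩, hu⟩ := (hVnone.and h).exists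
  exact ⟨u, hu⟩

end UltrafiltersOfWords

/-- An infinite word over `L` in the variables `v₀, v₁, …`, all of which occur, in this order of
first occurrence: `.inl a` is the letter `a`, `.inr j` is `vⱼ`, and `first j` is the first position
of `vⱼ`. -/
structure VariableWord (L : Type*) where
  letter : ℕ → L ⊕ ℕ
  first : ℕ → ℕ
  strictMono_first : StrictMono first
  letter_first : ∀ j, letter (first j) = .inr j
  first_le : ∀ {i j}, letter i = .inr j → first j ≤ i

namespace VariableWord

variable {L : Type*}

/-- The first `n` letters of `W` after substituting `a j` for the variable `vⱼ`. -/
def subst (W : VariableWord L) (a : ℕ → L) (n : ℕ) : List L :=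
  (List.range n).map fun i => (W.letter i).elim id a

@[simp]
theorem length_subst (W : VariableWord L) (a : ℕ → L) (n : ℕ) : (W.subst a n).length = n := by
  simp [subst]

theorem getElem_subst (W : VariableWord L) (a : ℕ → L) {n i : ℕ} (hi : i < (W.subst a n).length) :
    (W.subst a n)[i] = (W.letter i).elim id a := by
  simp [subst]

theorem exists_extension {P : Set (List L)} [Finite L]
    (hP : ∀ F : Set (List L), F.Finite → F ⊆ P →
      ∃ u : List (Option L), ∀ w ∈ F, ∀ a, w ++ a :: u.map (·.getD a) ∈ P)
    (n : ℕ) {x : List (L ⊕ ℕ)} (hx : ∀ a, x.map (Sum.elim id a) ∈ P) :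
    ∃ y, x ++ [.inr n] <+: y ∧ (∀ a, y.map (Sum.elim id a) ∈ P) ∧
      ∀ j, .inr j ∈ y → .inr j ∈ x ∨ j = n := by
  obtain ⟨u, hu⟩ := hP (Set.range fun a => x.map (Sum.elim id a))
    ((List.finite_length_eq L x.length).subset (by rintro _ ⟨a, rfl⟩; simp))
    (Set.range_subset_iff.2 hx)
  let z : List (L ⊕ ℕ) := u.map fun o => o.elim (.inr n) .inl
  refine ⟨x ++ .inr n :: z, ⟨z, by simp⟩, fun a => ?_, fun j hj => ?_⟩
  · have hz : z.map (Sum.elim id a) = u.map (·.getD (a n)) := by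
      simp only [z, List.map_map]
      exact List.map_congr_left fun o _ => by cases o <;> rfl
    simpa [hz] using hu _ ⟨a, rfl⟩ (a n)
  · rw [List.mem_append, List.mem_cons] at hj
    refine hj.imp_right (Or.rec Sum.inr_injective.eq_iff.1 fun hjz => ?_)
    obtain ⟨_ | a, -, ho⟩ := List.mem_map.1 hjz
    · exact (Sum.inr_injective ho).symm
    · cases ho

theorem exists_of_stages {X : ℕ → List (L ⊕ ℕ)} (hX : ∀ n, X n ++ [.inr n] <+: X (n + 1))
    (hvar : ∀ n j, .inr j ∈ X n → j < n) :
    ∃ W : VariableWord L, ∀ n, W.first n = (X n).length ∧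
      X n = (List.range (W.first n)).map W.letter := by
  have hmono : StrictMono fun n => (X n).length := strictMono_nat_of_lt_succ fun n => by
    simpa using (hX n).length_le
  obtain ⟨letter, hletter⟩ :=
    exists_forall_eq_map_range (fun n => (List.prefix_append _ _).trans (hX n)) hmono
  refine ⟨⟨letter, fun n => (X n).length, hmono, fun n => ?_, fun {i j} hij => ?_⟩,
    fun n => ⟨rfl, hletter n⟩⟩
  · have hlt : (X n).length < (X (n + 1)).length := hmono n.lt_succ_self
    have h := (hX n).getElem (i := (X n).length) (by simp)
    rw [List.getElem_concat_length rfl, List.getElem_of_eq (hletter (n + 1)) hlt] at h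
    simpa using h.symm
  · by_contra! hlt
    refine (hvar j j ?_).false
    rw [hletter j, ← hij]
    exact List.mem_map_of_mem (List.mem_range.2 hlt)

theorem exists_monochromatic [Finite L] [Nonempty L] {κ : Type*} [Finite κ] (p : List L)
    (c : List L → κ) :
    ∃ W : VariableWord L, (∀ i (hi : i < p.length), W.letter i = .inl p[i]) ∧
      ∃ e, ∀ a j, c (W.subst a (W.first j)) = e := by
  obtain ⟨e, P, ⟨w, hw⟩, hPe, hP⟩ := exists_append_substLetter_mem c p
  let Stage (n : ℕ) : Type _ :=
    {x : List (L ⊕ ℕ) // (∀ a, x.map (Sum.elim id a) ∈ P) ∧ ∀ j, .inr j ∈ x → j < n}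
  obtain ⟨X, hX₀, hX⟩ := exists_dependent_seq (α := Stage)
    (R := fun n x y => x.1 ++ [.inr n] <+: y.1)
    ⟨(p ++ w).map .inl, by simpa [Function.comp_def] using hw, by simp⟩ fun n x => by
      obtain ⟨y, hxy, hyP, hy⟩ := exists_extension hP n x.2.1
      exact ⟨⟨y, hyP, fun j hj => (hy j hj).elim (fun h => (x.2.2 j h).trans n.lt_succ_self)
        fun h => h ▸ n.lt_succ_self⟩, hxy⟩
  obtain ⟨W, hW⟩ := exists_of_stages hX fun n => (X n).2.2
  refine ⟨W, fun i hi => ?_, e, fun a j => hPe _ ?_⟩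
  · have hW₀ : (List.range (W.first 0)).map W.letter = (p ++ w).map .inl := by
      rw [← (hW 0).2, hX₀]
    have hi' : i < ((List.range (W.first 0)).map W.letter).length := by
      simp only [hW₀, List.length_map, List.length_append]; omega
    have h := List.getElem_of_eq hW₀ hi'
    simpa only [List.getElem_map, List.getElem_range, List.getElem_append_left hi] using h
  · have h := (X j).2.1 a
    rwa [(hW j).2, List.map_map] at h

end VariableWord

/-! ### Partitions and cubes -/

namespace Einf

/-- The set `μ(A)` of least representatives of the classes of `A`. -/
def leastReps (A : Einf) : Set ℕ := {k | ∀ m, A.1 m k → k ≤ m}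

/-- The least element of the `A`-class of `x`. -/
noncomputable def rep (A : Einf) (x : ℕ) : ℕ := sInf {m | A.1 m x}

variable {A B C D : Einf} {s : FinApprox} {k l m n x y : ℕ}

theorem rel_rep (A : Einf) (x : ℕ) : A.1 (A.rep x) x :=
  Nat.sInf_mem (s := {m | A.1 m x}) ⟨x, A.1.refl x⟩

theorem rep_le_of_rel (h : A.1 m x) : A.rep x ≤ m := Nat.sInf_le h

theorem rep_le (A : Einf) (x : ℕ) : A.rep x ≤ x := rep_le_of_rel (A.1.refl x)

theorem rep_eq_rep_iff : A.rep x = A.rep y ↔ A.1 x y := by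
  refine ⟨fun h => A.1.trans (A.1.symm (A.rel_rep x)) (h ▸ A.rel_rep y), fun h => ?_⟩
  exact (rep_le_of_rel (A.1.trans (A.rel_rep y) (A.1.symm h))).antisymm
    (rep_le_of_rel (A.1.trans (A.rel_rep x) h))

theorem ker_rep (A : Einf) : Setoid.ker A.rep = A.1 := Setoid.ext fun _ _ => rep_eq_rep_iff

theorem rep_rep (A : Einf) (x : ℕ) : A.rep (A.rep x) = A.rep x := rep_eq_rep_iff.2 (A.rel_rep x)

theorem mem_leastReps_iff_rep_eq : k ∈ A.leastReps ↔ A.rep k = k :=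
  ⟨fun h => (A.rep_le k).antisymm (h _ (A.rel_rep k)), fun h _ hm => h ▸ rep_le_of_rel hm⟩

theorem rep_mem_leastReps (A : Einf) (x : ℕ) : A.rep x ∈ A.leastReps :=
  mem_leastReps_iff_rep_eq.2 (A.rep_rep x)

theorem range_rep (A : Einf) : Set.range A.rep = A.leastReps :=
  Set.Subset.antisymm (Set.range_subset_iff.2 A.rep_mem_leastReps)
    fun k hk => ⟨k, mem_leastReps_iff_rep_eq.1 hk⟩

theorem infinite_leastReps (A : Einf) : A.leastReps.Infinite := by
  have := A.2
  rw [← A.range_rep, ← Set.infinite_coe_iff, ← (Setoid.quotientKerEquivRange A.rep).infinite_iff,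
    A.ker_rep]
  exact this

/-- The partition of `ℕ` into the fibres of `g`. -/
def ker (g : ℕ → ℕ) (hg : (Set.range g).Infinite) : Einf :=
  ⟨Setoid.ker g, (Setoid.quotientKerEquivRange g).infinite_iff.2 hg.to_subtype⟩

theorem rep_ker {g : ℕ → ℕ} {hg : (Set.range g).Infinite} (hle : ∀ x, g x ≤ x)
    (hidem : ∀ x, g (g x) = g x) (x : ℕ) : (ker g hg).rep x = g x :=
  (rep_le_of_rel (A := ker g hg) (hidem x)).antisymm <| by
    have h : g ((ker g hg).rep x) = g x := (ker g hg).rel_rep x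
    exact h ▸ hle _

theorem strictMono_mu (A : Einf) : StrictMono A.mu := Nat.nth_strictMono A.infinite_leastReps

theorem le_mu (A : Einf) (n : ℕ) : n ≤ A.mu n := A.strictMono_mu.le_apply

theorem mu_mem_leastReps (A : Einf) (n : ℕ) : A.mu n ∈ A.leastReps :=
  Nat.nth_mem_of_infinite A.infinite_leastReps n

theorem mem_leastReps_iff_exists_mu_eq : k ∈ A.leastReps ↔ ∃ n, A.mu n = k :=
  (Set.ext_iff.1 (Nat.range_nth_of_infinite A.infinite_leastReps) k).symm

theorem rep_mu (A : Einf) (n : ℕ) : A.rep (A.mu n) = A.mu n :=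
  mem_leastReps_iff_rep_eq.1 (A.mu_mem_leastReps n)

/-- The index `n` of the class of `x` in the enumeration of the classes by `μ_n(A)`. -/
noncomputable def idx (A : Einf) (x : ℕ) : ℕ := Nat.count (· ∈ A.leastReps) (A.rep x)

theorem mu_idx (A : Einf) (x : ℕ) : A.mu (A.idx x) = A.rep x :=
  Nat.nth_count (A.rep_mem_leastReps x)

theorem idx_mu (A : Einf) (n : ℕ) : A.idx (A.mu n) = n :=
  A.strictMono_mu.injective (by rw [mu_idx, rep_mu])

theorem idx_lt_iff : A.idx x < n ↔ A.rep x < A.mu n := by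
  rw [← A.mu_idx, A.strictMono_mu.lt_iff_lt]

/-- The restriction of `A` to `{0,…,k−1}`; thus `r_n(A)` is `A.approx (A.mu n)`, and
`tr(A, B, n)` is the relation underlying `A.approx (B.mu n)`. -/
def approx (A : Einf) (k : ℕ) : FinApprox := ⟨k, Setoid.comap (fun i => (i : ℕ)) A.1⟩

theorem approx_eq_approx_iff :
    A.approx k = B.approx k ↔ ∀ i < k, ∀ j < k, (A.1 i j ↔ B.1 i j) := by
  refine ⟨fun h i hi j hj => ?_, fun h => Sigma.ext rfl (heq_of_eq ?_)⟩
  · have hrel := Setoid.ext_iff.1 (eq_of_heq (Sigma.ext_iff.1 h).2)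
    exact hrel (a := ⟨i, hi⟩) (b := ⟨j, hj⟩)
  · exact Setoid.ext fun i j => h i i.2 j j.2

theorem approx_eq_approx_of_le (h : A.approx k = B.approx k) (hl : l ≤ k) :
    A.approx l = B.approx l :=
  approx_eq_approx_iff.2 fun i hi j hj =>
    approx_eq_approx_iff.1 h i (hi.trans_le hl) j (hj.trans_le hl)

theorem trace_eq_trace_of_approx_eq (h : A.approx (C.mu n) = B.approx (C.mu n)) :
    trace A C n = trace B C n :=
  Setoid.ext fun i j => approx_eq_approx_iff.1 h i i.2 j j.2

theorem initSeg_iff : InitSeg s A ↔ s.1 ∈ A.leastReps ∧ A.approx s.1 = s := by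
  constructor
  · rintro ⟨n, rfl⟩
    exact ⟨A.mu_mem_leastReps n, rfl⟩
  · rintro ⟨hs, hA⟩
    obtain ⟨n, hn⟩ := mem_leastReps_iff_exists_mu_eq.1 hs
    exact ⟨n, by rw [← hA, ← hn]; rfl⟩

theorem initSeg_approx_iff : InitSeg (A.approx k) B ↔ k ∈ B.leastReps ∧ B.approx k = A.approx k :=
  initSeg_iff

theorem mem_leastReps_iff_of_approx_eq (h : A.approx l = B.approx l) (hk : k < l) :
    k ∈ A.leastReps ↔ k ∈ B.leastReps := by
  have hrel := approx_eq_approx_iff.1 h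
  refine ⟨fun hA m hm => ?_, fun hB m hm => ?_⟩ <;> by_contra! hmk
  · exact hmk.not_ge (hA m ((hrel m (hmk.trans hk) k hk).2 hm))
  · exact hmk.not_ge (hB m ((hrel m (hmk.trans hk) k hk).1 hm))

theorem mu_eq_of_initSeg_rn (h : InitSeg (rn A m) B) (hn : n ≤ m) : B.mu n = A.mu n := by
  obtain ⟨hm, hAB⟩ := initSeg_approx_iff.1 h
  have hlt : ∀ k < A.mu m, (k ∈ B.leastReps ↔ k ∈ A.leastReps) := fun k hk =>
    mem_leastReps_iff_of_approx_eq hAB hk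
  have hmem : A.mu n ∈ B.leastReps := by
    rcases hn.eq_or_lt with rfl | hn
    · exact hm
    · exact (hlt _ (A.strictMono_mu hn)).2 (A.mu_mem_leastReps n)
  have hcount : Nat.count (· ∈ B.leastReps) (A.mu n) = Nat.count (· ∈ A.leastReps) (A.mu n) := by
    simp only [Nat.count_eq_card_filter_range]
    refine congrArg Finset.card (Finset.filter_congr fun k hk => hlt k ?_)
    exact (Finset.mem_range.1 hk).trans_le (A.strictMono_mu.monotone hn)
  calc B.mu n = B.mu (Nat.count (· ∈ B.leastReps) (A.mu n)) := by
        rw [hcount]; exact congrArg B.mu (Nat.count_nth_of_infinite A.infinite_leastReps n).symm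
    _ = A.mu n := Nat.nth_count hmem

theorem rn_eq_of_initSeg_rn (h : InitSeg (rn A m) B) (hn : n ≤ m) : rn B n = rn A n := by
  have hmu := mu_eq_of_initSeg_rn h hn
  change B.approx (B.mu n) = A.approx (A.mu n)
  rw [hmu]
  exact approx_eq_approx_of_le (initSeg_iff.1 h).2 (A.strictMono_mu.monotone hn)

theorem rn_eq_of_approx_eq (h : B.approx k = A.approx k) (hn : A.mu n < k) : rn B n = rn A n :=
  rn_eq_of_initSeg_rn (m := n) (initSeg_approx_iff.2
    ⟨(mem_leastReps_iff_of_approx_eq h hn).2 (A.mu_mem_leastReps n),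
      approx_eq_approx_of_le h hn.le⟩) le_rfl

theorem Coarsen.refl (A : Einf) : Coarsen A A := fun _ _ h => h

theorem Coarsen.trans (hAB : Coarsen A B) (hBC : Coarsen B C) : Coarsen A C :=
  fun i j hij => hAB i j (hBC i j hij)

theorem coarsen_iff_rel_rep : Coarsen A B ↔ ∀ x, A.1 (B.rep x) x := by
  refine ⟨fun h x => h _ _ (B.rel_rep x), fun h i j hij => ?_⟩
  exact A.1.trans (A.1.symm (h i)) (rep_eq_rep_iff.2 hij ▸ h j)

theorem Coarsen.leastReps_subset (h : Coarsen A B) : A.leastReps ⊆ B.leastReps :=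
  fun _ hk m hm => hk m (h _ _ hm)

theorem Coarsen.rep_rep (h : Coarsen A B) (x : ℕ) : A.rep (B.rep x) = A.rep x :=
  rep_eq_rep_iff.2 (h _ _ (B.rel_rep x))

theorem InitSeg.self_mem_cube (h : InitSeg s A) : A ∈ cube s A := ⟨h, Coarsen.refl A⟩

theorem cube_subset_cube (s : FinApprox) (h : Coarsen A B) : cube s A ⊆ cube s B :=
  fun _ hD => ⟨hD.1, hD.2.trans h⟩

theorem rel_iff_rel_of_initSeg (hA : InitSeg s A) (hB : InitSeg s B) (hx : x < s.1) (hy : y < s.1) :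
    A.1 x y ↔ B.1 x y :=
  approx_eq_approx_iff.1 ((initSeg_iff.1 hA).2.trans (initSeg_iff.1 hB).2.symm) x hx y hy

theorem mem_cube_rn_iff : B ∈ cube (rn A n) C ↔ rn B n = rn A n ∧ Coarsen B C :=
  and_congr_left' ⟨fun h => rn_eq_of_initSeg_rn h le_rfl, fun h => ⟨n, h⟩⟩

/-- The representative map of the partition that agrees with `A` on the `A`-classes meeting
`{0,…,k−1}` and with `B` elsewhere. -/
noncomputable def glueRep (A B : Einf) (k x : ℕ) : ℕ := if A.rep x < k then A.rep x else B.rep x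

theorem glueRep_of_rep_lt (h : A.rep x < k) : glueRep A B k x = A.rep x := if_pos h

theorem glueRep_of_not_rep_lt (h : ¬ A.rep x < k) : glueRep A B k x = B.rep x := if_neg h

theorem glueRep_le (A B : Einf) (k x : ℕ) : glueRep A B k x ≤ x := by
  rw [glueRep]; split_ifs <;> exact rep_le _ x

theorem glueRep_of_mem_leastReps (h : Coarsen B A) (hx : x ∈ B.leastReps) :
    glueRep A B k x = x := by
  rw [glueRep, mem_leastReps_iff_rep_eq.1 hx, mem_leastReps_iff_rep_eq.1 (h.leastReps_subset hx),
    ite_self]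

theorem glueRep_glueRep (h : Coarsen B A) (k x : ℕ) :
    glueRep A B k (glueRep A B k x) = glueRep A B k x := by
  by_cases hx : A.rep x < k
  · rw [glueRep_of_rep_lt hx, glueRep_of_rep_lt (by rwa [A.rep_rep]), A.rep_rep]
  · rw [glueRep_of_not_rep_lt hx, glueRep_of_mem_leastReps h (B.rep_mem_leastReps x)]

-- Amalgamation: `s` may differ from `A.approx s.1`, so `B` need not lie in the cube of the latter.
theorem exists_mem_cube_approx_cube_subset (hB : B ∈ cube s A) :
    ∃ B' ∈ cube (A.approx s.1) A, cube s B' ⊆ cube s B := by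
  obtain ⟨hBs, hBA⟩ := hB
  let B' : Einf := ker (glueRep A B s.1) <|
    B.infinite_leastReps.mono fun x hx => ⟨x, glueRep_of_mem_leastReps hBA hx⟩
  have rep_B' : ∀ x, B'.rep x = glueRep A B s.1 x :=
    rep_ker (glueRep_le A B s.1) (glueRep_glueRep hBA s.1)
  refine ⟨B', ⟨initSeg_approx_iff.2 ⟨?_, ?_⟩, fun i j hij => ?_⟩, fun D hD => ⟨hD.1, ?_⟩⟩
  · rw [mem_leastReps_iff_rep_eq, rep_B', glueRep_of_mem_leastReps hBA (initSeg_iff.1 hBs).1]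
  · refine approx_eq_approx_iff.2 fun i hi j hj => ?_
    rw [← rep_eq_rep_iff, ← rep_eq_rep_iff, rep_B', rep_B',
      glueRep_of_rep_lt ((A.rep_le i).trans_lt hi), glueRep_of_rep_lt ((A.rep_le j).trans_lt hj)]
  · have hA := rep_eq_rep_iff.2 hij
    have hB := rep_eq_rep_iff.2 (hBA i j hij)
    simp only [← rep_eq_rep_iff, rep_B', glueRep, hA, hB]
  · refine coarsen_iff_rel_rep.2 fun x => ?_
    have hDx : D.1 (glueRep A B s.1 x) x := rep_B' x ▸ hD.2 _ _ (B'.rel_rep x)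
    by_cases hx : A.rep x < s.1
    · rw [glueRep_of_rep_lt hx] at hDx
      have hlt : B.rep x < s.1 := (rep_le_of_rel (hBA _ _ (A.rel_rep x))).trans_lt hx
      refine D.1.trans ((rel_iff_rel_of_initSeg hD.1 hBs hlt hx).2 ?_) hDx
      exact rep_eq_rep_iff.1 (by rw [B.rep_rep, hBA.rep_rep])
    · rwa [glueRep_of_not_rep_lt hx] at hDx

theorem finite_setOf_fst_eq (k : ℕ) : {t : FinApprox | t.1 = k}.Finite := by
  have : Finite (Setoid (Fin k)) := Finite.of_injective (fun σ i j => σ i j)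
    fun σ τ h => Setoid.ext fun i j => iff_of_eq (congrFun₂ h i j)
  refine (Set.finite_range fun σ : Setoid (Fin k) => (⟨k, σ⟩ : FinApprox)).subset ?_
  rintro ⟨_, σ⟩ rfl
  exact ⟨σ, rfl⟩

/-! ### Fusion -/

/-- Every nonempty cube `[s, A]` has a subcube `[s, B]`, `B ∈ [s, A]`, with property `Q s`. -/
def CubeDense (Q : FinApprox → Set Einf → Prop) : Prop :=
  ∀ s A, (cube s A).Nonempty → ∃ B ∈ cube s A, Q s (cube s B)

variable {Q : FinApprox → Set Einf → Prop}

theorem cubeDense_of_initSeg (h : ∀ s A, InitSeg s A → ∃ B ∈ cube s A, Q s (cube s B)) :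
    CubeDense Q := by
  rintro s A ⟨D, hD⟩
  obtain ⟨B, hB, hQ⟩ := h s D hD.1
  exact ⟨B, cube_subset_cube s hD.2 hB, hQ⟩

theorem CubeDense.exists_forall_fst_eq (hQ : CubeDense Q) (hanti : ∀ t, Antitone (Q t))
    (hs : InitSeg s A) :
    ∃ B ∈ cube s A, ∀ t : FinApprox, t.1 = s.1 → (cube t B).Nonempty → Q t (cube t B) := by
  suffices h : ∀ F : Set FinApprox, F.Finite → (∀ t ∈ F, t.1 = s.1) →
      ∃ B ∈ cube s A, ∀ t ∈ F, (cube t B).Nonempty → Q t (cube t B) from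
    h _ (finite_setOf_fst_eq s.1) fun _ => id
  intro F hF hFs
  induction F, hF using Set.Finite.induction_on with
  | empty => exact ⟨A, hs.self_mem_cube, by simp⟩
  | @insert t F _ _ ih =>
    rw [Set.forall_mem_insert] at hFs
    obtain ⟨B, hB, hBF⟩ := ih hFs.2
    simp only [Set.forall_mem_insert]
    by_cases ht : (cube t B).Nonempty
    · obtain ⟨D, hD, hDQ⟩ := hQ t B ht
      obtain ⟨B', hB', hB'D⟩ := exists_mem_cube_approx_cube_subset hD
      rw [hFs.1, (initSeg_iff.1 hB.1).2] at hB'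
      refine ⟨B', cube_subset_cube s hB.2 hB', fun _ => hanti t hB'D hDQ, fun u hu hne => ?_⟩
      have hsub := cube_subset_cube u hB'.2
      exact hanti u hsub (hBF u hu (hne.mono hsub))
    · exact ⟨B, hB, fun h => absurd h ht, hBF⟩

theorem exists_forall_mem_cube_of_le {E : ℕ → Einf} {K : ℕ → ℕ} (hK : StrictMono K)
    (hE : ∀ n m, n ≤ m → E m ∈ cube ((E n).approx (K n)) (E n)) :
    ∃ B, ∀ n, B ∈ cube ((E n).approx (K n)) (E n) := by
  have rel_mono : ∀ {n m i j}, n ≤ m → (E n).1 i j → (E m).1 i j := fun h => (hE _ _ h).2 _ _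
  have K_le : ∀ {n m l}, (E m).1 l (K n) → K n ≤ l := fun {n m l} h =>
    (initSeg_iff.1 (hE n _ (le_max_left n m)).1).1 l (rel_mono (le_max_right n m) h)
  let σ : Setoid ℕ :=
    { r i j := ∃ n, (E n).1 i j
      iseqv :=
        { refl i := ⟨0, (E 0).1.refl i⟩
          symm := fun ⟨n, h⟩ => ⟨n, (E n).1.symm h⟩
          trans := fun ⟨n, h⟩ ⟨m, h'⟩ => ⟨max n m, (E (max n m)).1.trans
            (rel_mono (le_max_left n m) h) (rel_mono (le_max_right n m) h')⟩ } }
  have hσ : Infinite (Quotient σ) := Infinite.of_injective (fun n => Quotient.mk σ (K n))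
    fun n m h => by
      obtain ⟨l, hl⟩ := Quotient.exact h
      exact hK.injective ((K_le ((E l).1.symm hl)).antisymm (K_le hl))
  refine ⟨⟨σ, hσ⟩, fun n => ⟨initSeg_approx_iff.2 ⟨?_, ?_⟩, fun i j h => ⟨n, h⟩⟩⟩
  · rintro l ⟨m, h⟩
    exact K_le h
  · refine approx_eq_approx_iff.2 fun i hi j hj => ⟨fun ⟨m, h⟩ => ?_, fun h => ⟨n, h⟩⟩
    have hmax := le_max_left n m
    rw [rel_iff_rel_of_initSeg (hE n n le_rfl).1 (hE n _ hmax).1 hi hj]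
    exact rel_mono (le_max_right n m) h

theorem exists_forall_mem_cube_rn {E : ℕ → Einf} {q : ℕ}
    (hE : ∀ n, E (n + 1) ∈ cube (rn (E n) (q + n)) (E n)) :
    ∃ B, ∀ n, B ∈ cube (rn (E n) (q + n)) (E n) := by
  have hle : ∀ n m, n ≤ m → E m ∈ cube (rn (E n) (q + n)) (E n) := fun n m h => by
    induction m, h using Nat.le_induction with
    | base => exact InitSeg.self_mem_cube ⟨_, rfl⟩
    | succ m hnm ih =>
      have hrn : rn (E (m + 1)) (q + n) = rn (E m) (q + n) :=
        rn_eq_of_initSeg_rn (hE m).1 (by omega)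
      exact mem_cube_rn_iff.2 ⟨hrn.trans (mem_cube_rn_iff.1 ih).1, (hE m).2.trans ih.2⟩
  refine exists_forall_mem_cube_of_le (strictMono_nat_of_lt_succ fun n => ?_) hle
  calc (E n).mu (q + n) = (E (n + 1)).mu (q + n) :=
        (mu_eq_of_initSeg_rn (hE n).1 le_rfl).symm
    _ < (E (n + 1)).mu (q + (n + 1)) := (E (n + 1)).strictMono_mu (by omega)

theorem CubeDense.exists_forall_le_fst (hQ : CubeDense Q) (hanti : ∀ t, Antitone (Q t))
    (hs : InitSeg s A) :
    ∃ B ∈ cube s A, ∀ t : FinApprox, s.1 ≤ t.1 → (cube t B).Nonempty → Q t (cube t B) := by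
  obtain ⟨q, rfl⟩ := hs
  obtain ⟨E, rfl, hE⟩ := exists_dependent_seq (α := fun _ => Einf) A
    fun n A => hQ.exists_forall_fst_eq hanti (s := rn A (q + n)) ⟨_, rfl⟩
  obtain ⟨B, hB⟩ := exists_forall_mem_cube_rn fun n => (hE n).1
  refine ⟨B, hB 0, fun t ht hne => ?_⟩
  obtain ⟨n, hn⟩ : ∃ n, t.1 = (E n).mu (q + n) := by
    obtain ⟨D, hD⟩ := hne
    obtain ⟨r, hr⟩ :=
      mem_leastReps_iff_exists_mu_eq.1 (hD.2.leastReps_subset (initSeg_iff.1 hD.1).1)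
    have hmu : ∀ n, B.mu (q + n) = (E n).mu (q + n) := fun n =>
      mu_eq_of_initSeg_rn (hB n).1 le_rfl
    obtain ⟨n, rfl⟩ := Nat.exists_eq_add_of_le (B.strictMono_mu.le_iff_le.1 <|
      ((hmu 0).trans_le ht).trans_eq hr.symm)
    exact ⟨n, hr.symm.trans (hmu n)⟩
  have hsub := cube_subset_cube t (hB (n + 1)).2
  exact hanti t hsub ((hE n).2 t hn (hne.mono hsub))

/-! ### Pigeonhole for one-step extensions -/

/-- The coarsening of `C` that joins the `i`-th class of `C` to the `v i`-th one. -/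
noncomputable def joinClasses (C : Einf) (v : ℕ → ℕ) (hv : (Set.range v).Infinite) : Einf :=
  ker (fun x => C.mu (v (C.idx x))) <| by
    refine (hv.image C.strictMono_mu.injective.injOn).mono ?_
    rintro _ ⟨_, ⟨i, rfl⟩, rfl⟩
    exact ⟨C.mu i, by simp only [idx_mu]⟩

section JoinClasses

variable {v : ℕ → ℕ} {hv : (Set.range v).Infinite}

theorem joinClasses_coarsen : Coarsen (C.joinClasses v hv) C := fun i j hij => by
  change C.mu (v (C.idx i)) = C.mu (v (C.idx j))
  rw [idx, idx, rep_eq_rep_iff.2 hij]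

theorem rep_joinClasses (hle : ∀ i, v i ≤ i) (hidem : ∀ i, v (v i) = v i) (x : ℕ) :
    (C.joinClasses v hv).rep x = C.mu (v (C.idx x)) := by
  refine rep_ker (fun x => ?_) (fun x => by rw [idx_mu, hidem]) x
  calc C.mu (v (C.idx x)) ≤ C.mu (C.idx x) := C.strictMono_mu.monotone (hle _)
    _ = C.rep x := C.mu_idx x
    _ ≤ x := C.rep_le x

theorem joinClasses_mem_cube (hle : ∀ i, v i ≤ i) (hidem : ∀ i, v (v i) = v i)
    (hfix : ∀ i ≤ n, v i = i) : C.joinClasses v hv ∈ cube (rn C n) C := by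
  refine ⟨initSeg_approx_iff.2 ⟨?_, approx_eq_approx_iff.2 fun i hi j hj => ?_⟩,
    joinClasses_coarsen⟩
  · rw [mem_leastReps_iff_rep_eq, rep_joinClasses hle hidem, idx_mu, hfix n le_rfl]
  · have hrep : ∀ {x}, x < C.mu n → (C.joinClasses v hv).rep x = C.rep x := fun {x} hx => by
      rw [rep_joinClasses hle hidem, hfix _ (idx_lt_iff.2 ((C.rep_le x).trans_lt hx)).le,
        mu_idx]
    rw [← rep_eq_rep_iff, ← rep_eq_rep_iff, hrep hi, hrep hj]

end JoinClasses

/-- The approximation with domain `{0,…,μ_{|w|}(C)−1}` that joins the classes of `C` whose indices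
are positions of the same letter in `w`. -/
noncomputable def wordApprox (C : Einf) {L : Type*} (w : List L) : FinApprox :=
  ⟨C.mu w.length, Setoid.ker fun x => w[C.idx x]?⟩

theorem approx_eq_wordApprox {w : List (Fin n)} (hD : Coarsen D C)
    (hw : ∀ i (hi : i < w.length), D.rep (C.mu i) = C.mu w[i]) :
    D.approx (C.mu w.length) = C.wordApprox w := by
  have hrep : ∀ x : Fin (C.mu w.length), ∃ h : C.idx x < w.length, D.rep x = C.mu w[C.idx x] :=
    fun x => ⟨idx_lt_iff.2 ((C.rep_le x).trans_lt x.2), by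
      rw [← hw, mu_idx, hD.rep_rep]⟩
  refine Sigma.ext rfl (heq_of_eq (Setoid.ext fun x y => ?_))
  obtain ⟨hx, hDx⟩ := hrep x
  obtain ⟨hy, hDy⟩ := hrep y
  change D.1 x y ↔ w[C.idx x]? = w[C.idx y]?
  rw [← rep_eq_rep_iff, hDx, hDy, C.strictMono_mu.injective.eq_iff, Fin.val_inj,
    List.getElem?_eq_getElem hx, List.getElem?_eq_getElem hy, Option.some_inj]

end Einf

namespace VariableWord

variable {n : ℕ} {W : VariableWord (Fin n)}

/-- The map sending a position of the letter `a` to the position `a`, and a position of a variable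
to the first position of that variable. -/
def retraction (W : VariableWord (Fin n)) (i : ℕ) : ℕ :=
  (W.letter i).elim Fin.val W.first

theorem infinite_range_retraction (W : VariableWord (Fin n)) : (Set.range W.retraction).Infinite :=
  (Set.infinite_range_of_injective W.strictMono_first.injective).mono <|
    Set.range_subset_iff.2 fun j => ⟨W.first j, by simp [retraction, W.letter_first]⟩

theorem exists_first_eq_of_retraction_eq {i : ℕ} (hi : n ≤ i) (h : W.retraction i = i) :
    ∃ j, W.first j = i := by
  cases hl : W.letter i with
  | inl a =>
    simp only [retraction, hl, Sum.elim_inl] at h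
    omega
  | inr j => exact ⟨j, by simpa [retraction, hl] using h⟩

variable (hW : ∀ i (hi : i < n), W.letter i = .inl ⟨i, hi⟩)

include hW

theorem retraction_of_lt {i : ℕ} (hi : i < n) : W.retraction i = i := by
  simp [retraction, hW i hi]

theorem retraction_le (i : ℕ) : W.retraction i ≤ i := by
  by_cases hi : i < n
  · exact (retraction_of_lt hW hi).le
  · cases h : W.letter i with
    | inl a => simpa [retraction, h] using a.2.le.trans (not_lt.1 hi)
    | inr j => simpa [retraction, h] using W.first_le h

theorem retraction_retraction (i : ℕ) : W.retraction (W.retraction i) = W.retraction i := by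
  cases h : W.letter i with
  | inl a => simp [retraction, h, hW a a.2]
  | inr j => simp [retraction, h, W.letter_first]

end VariableWord

namespace Einf

variable {B C D : Einf} {n : ℕ}

section Retraction

variable {q : ℕ} {W : VariableWord (Fin (q + 1))}
  (hW : ∀ i (hi : i < q + 1), W.letter i = .inl ⟨i, hi⟩)

include hW

theorem exists_mu_first_eq_mu_succ
    (hD : D ∈ cube (rn C q) (C.joinClasses W.retraction W.infinite_range_retraction)) :
    ∃ j, C.mu (W.first j) = D.mu (q + 1) := by
  obtain ⟨hDC, hDB⟩ := hD
  have hmem := hDB.leastReps_subset (D.mu_mem_leastReps (q + 1))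
  obtain ⟨i, hi⟩ := mem_leastReps_iff_exists_mu_eq.1 (joinClasses_coarsen.leastReps_subset hmem)
  rw [← hi, mem_leastReps_iff_rep_eq, rep_joinClasses (W.retraction_le hW)
    (W.retraction_retraction hW), idx_mu] at hmem
  have hqi : q < i := C.strictMono_mu.lt_iff_lt.1 <| by
    rw [hi, ← mu_eq_of_initSeg_rn hDC le_rfl]
    exact D.strictMono_mu q.lt_succ_self
  obtain ⟨j, rfl⟩ := W.exists_first_eq_of_retraction_eq hqi (C.strictMono_mu.injective hmem)
  exact ⟨j, hi⟩

theorem exists_rn_succ_eq_wordApprox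
    (hD : D ∈ cube (rn C q) (C.joinClasses W.retraction W.infinite_range_retraction)) :
    ∃ a j, rn D (q + 1) = C.wordApprox (W.subst a (W.first j)) := by
  obtain ⟨j, hj⟩ := exists_mu_first_eq_mu_succ hW hD
  obtain ⟨hDC, hDB⟩ := hD
  have hmu : ∀ {r}, r ≤ q → D.mu r = C.mu r := mu_eq_of_initSeg_rn hDC
  have hrep : ∀ i, D.rep (C.mu i) = D.rep (C.mu (W.retraction i)) := fun i => by
    rw [← hDB.rep_rep, rep_joinClasses (W.retraction_le hW) (W.retraction_retraction hW), idx_mu]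
  have hletter : ∀ j' < j, ∃ a : Fin (q + 1), D.rep (C.mu (W.first j')) = C.mu a := fun j' hj' => by
    have hlt : D.rep (C.mu (W.first j')) < D.mu (q + 1) := by
      rw [← hj]
      exact (D.rep_le _).trans_lt (C.strictMono_mu (W.strictMono_first hj'))
    refine ⟨⟨_, idx_lt_iff.2 hlt⟩, ?_⟩
    rw [← hmu (Nat.lt_succ_iff.1 (idx_lt_iff.2 hlt)), mu_idx]
  choose! a ha using hletter
  have happrox : D.approx (C.mu (W.subst a (W.first j)).length) =
      C.wordApprox (W.subst a (W.first j)) := by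
    refine approx_eq_wordApprox (hDB.trans joinClasses_coarsen) fun i hij => ?_
    rw [W.getElem_subst, hrep]
    cases h : W.letter i with
    | inl b => simp [VariableWord.retraction, h, ← hmu (Nat.lt_succ_iff.1 b.2), rep_mu]
    | inr j' =>
      have hj' : j' < j := W.strictMono_first.lt_iff_lt.1 <|
        (W.first_le h).trans_lt (by simpa using hij)
      simpa [VariableWord.retraction, h] using ha j' hj'
  rw [W.length_subst, hj] at happrox
  exact ⟨a, j, happrox⟩

end Retraction

theorem exists_mem_cube_forall_colour_rn_succ_eq {κ : Type*} [Finite κ] (c : FinApprox → κ)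
    (C : Einf) (q : ℕ) :
    ∃ B ∈ cube (rn C q) C, ∃ e, ∀ D ∈ cube (rn C q) B, c (rn D (q + 1)) = e := by
  obtain ⟨W, hW, e, he⟩ := VariableWord.exists_monochromatic (List.finRange (q + 1))
    fun w => c (C.wordApprox w)
  replace hW : ∀ i (hi : i < q + 1), W.letter i = .inl ⟨i, hi⟩ := fun i hi => by
    simp [hW i (by simpa using hi)]
  refine ⟨C.joinClasses W.retraction W.infinite_range_retraction, joinClasses_mem_cube
    (W.retraction_le hW) (W.retraction_retraction hW)
    fun i hi => W.retraction_of_lt hW (Nat.lt_succ_of_le hi), e, fun D hD => ?_⟩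
  obtain ⟨a, j, h⟩ := exists_rn_succ_eq_wordApprox hW hD
  rw [h, he]

/-! ### Ramsey sets -/

open scoped MeasureTheory

/-- A set is Ramsey if every nonempty cube `[s, A]` has a subcube `[s, B]`, `B ∈ [s, A]`, that is
contained in it or disjoint from it. -/
def IsRamsey (X : Set Einf) : Prop := CubeDense fun _ S => S ⊆ X ∨ S ⊆ Xᶜ

/-- Openness in the metrizable topology, in which the sets of all `D` with a given restriction to
`{0,…,k−1}` form a basis. This is coarser than the topology generated by the Ellentuck cubes. -/
def IsMetricOpen (O : Set Einf) : Prop :=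
  ∀ C ∈ O, ∃ k, ∀ D : Einf, D.approx k = C.approx k → D ∈ O

section MetricOpen

variable {O : Set Einf}

theorem cubeDense_subset_or_forall_not_subset (O : Set Einf) :
    CubeDense fun s S => S ⊆ O ∨ ∀ B ∈ S, ¬ cube s B ⊆ O :=
  cubeDense_of_initSeg fun s A hs => by
    by_cases h : ∀ B ∈ cube s A, ¬ cube s B ⊆ O
    · exact ⟨A, hs.self_mem_cube, .inr h⟩
    · push Not at h
      obtain ⟨B, hB, hBO⟩ := h
      exact ⟨B, hB, .inl hBO⟩

theorem cubeDense_exists_forall_colour_rn_succ_eq {κ : Type*} [Finite κ] (c : FinApprox → κ) :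
    CubeDense fun s S => ∃ e, ∀ D ∈ S, ∀ n, rn D n = s → c (rn D (n + 1)) = e := by
  refine cubeDense_of_initSeg ?_
  rintro _ A ⟨q, rfl⟩
  obtain ⟨B, hB, e, he⟩ := exists_mem_cube_forall_colour_rn_succ_eq c A q
  refine ⟨B, hB, e, fun D hD n hn => ?_⟩
  obtain rfl : n = q := D.strictMono_mu.injective <|
    congrArg Sigma.fst (hn.trans (mem_cube_rn_iff.1 hD).1.symm)
  exact he D hD

theorem cube_rn_subset_of_forall_cube_rn_succ_subset
    (hdec : cube (rn D n) B ⊆ O ∨ ∀ E ∈ cube (rn D n) B, ¬ cube (rn D n) E ⊆ O)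
    (hDB : Coarsen D B) (hsucc : ∀ E ∈ cube (rn D n) D, cube (rn E (n + 1)) B ⊆ O) :
    cube (rn D n) B ⊆ O :=
  hdec.resolve_right fun h => h D ⟨⟨n, rfl⟩, hDB⟩ fun E hE =>
    hsucc E hE ⟨⟨n + 1, rfl⟩, hE.2.trans hDB⟩

theorem IsMetricOpen.exists_cube_rn_subset (hO : IsMetricOpen O) (hD : D ∈ O) (q : ℕ) :
    ∃ n ≥ q, ∀ B, cube (rn D n) B ⊆ O := by
  obtain ⟨k, hk⟩ := hO D hD
  refine ⟨max q k, le_max_left q k, fun B E hE => hk E ?_⟩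
  exact approx_eq_approx_of_le (initSeg_approx_iff.1 hE.1).2
    ((le_max_right q k).trans (D.le_mu _))

-- Galvin–Prikry forcing: `B` accepts `s` if `cube s B ⊆ O`. Once acceptance is decided everywhere
-- and depends only on `rn D n` for the next approximations `rn D (n + 1)`, rejection is inherited
-- by longer approximations, whereas a member of the open set `O` has an accepted approximation.
theorem IsMetricOpen.isRamsey (hO : IsMetricOpen O) : IsRamsey O := by
  refine cubeDense_of_initSeg fun s A hs => ?_
  obtain ⟨B₁, hB₁, hdec⟩ := (cubeDense_subset_or_forall_not_subset O).exists_forall_le_fst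
    (fun _ _ _ hST => .imp hST.trans fun h B hB => h B (hST hB)) hs
  obtain ⟨B₂, hB₂, hcol⟩ := (cubeDense_exists_forall_colour_rn_succ_eq
    fun t => cube t B₁ ⊆ O).exists_forall_le_fst
    (fun _ _ _ hST ⟨e, he⟩ => ⟨e, fun D hD => he D (hST hD)⟩) hB₁.1
  refine ⟨B₂, cube_subset_cube s hB₁.2 hB₂, ?_⟩
  by_cases hacc : cube s B₁ ⊆ O
  · exact .inl ((cube_subset_cube s hB₂.2).trans hacc)
  refine .inr fun D hD hDO => ?_
  obtain ⟨⟨q, rfl⟩, hDB₂⟩ := hD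
  have hDB₁ := hDB₂.trans hB₂.2
  have hrej : ∀ n ≥ q, ¬ cube (rn D n) B₁ ⊆ O := fun n hn => by
    induction n, hn using Nat.le_induction with
    | base => exact hacc
    | succ n hqn ih =>
      have hle : D.mu q ≤ D.mu n := D.strictMono_mu.monotone hqn
      refine mt (fun h => ?_) ih
      refine cube_rn_subset_of_forall_cube_rn_succ_subset
        (hdec (rn D n) hle ⟨D, ⟨n, rfl⟩, hDB₁⟩) hDB₁ fun E hE => ?_
      obtain ⟨e, he⟩ := hcol (rn D n) hle ⟨D, ⟨n, rfl⟩, hDB₂⟩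
      have hDE := (he D ⟨⟨n, rfl⟩, hDB₂⟩ n rfl).trans
        (he E (cube_subset_cube _ hDB₂ hE) n (mem_cube_rn_iff.1 hE).1).symm
      exact hDE.mp h
  obtain ⟨n, hn, hsub⟩ := hO.exists_cube_rn_subset hDO q
  exact hrej n hn (hsub B₁)

end MetricOpen

theorem isRamsey_empty : IsRamsey ∅ :=
  cubeDense_of_initSeg fun _ A hs => ⟨A, hs.self_mem_cube, .inr (by simp)⟩

theorem IsRamsey.compl {X : Set Einf} (h : IsRamsey X) : IsRamsey Xᶜ := fun s A hne => by
  simpa only [compl_compl, or_comm] using h s A hne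

theorem cubeDense_forall_subset_or_subset_compl {ι : Type*} {I : FinApprox → Set ι}
    (hI : ∀ s, (I s).Finite) {X : ι → Set Einf} (hX : ∀ i, IsRamsey (X i)) :
    CubeDense fun s S => ∀ i ∈ I s, S ⊆ X i ∨ S ⊆ (X i)ᶜ := by
  refine cubeDense_of_initSeg fun s A hs => ?_
  induction I s, hI s using Set.Finite.induction_on with
  | empty => exact ⟨A, hs.self_mem_cube, by simp⟩
  | @insert i F _ _ ih =>
    obtain ⟨B, hB, hBF⟩ := ih
    obtain ⟨B', hB', hi⟩ := hX i s B ⟨B, hB.1.self_mem_cube⟩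
    refine ⟨B', cube_subset_cube s hB.2 hB', Set.forall_mem_insert.2 ⟨hi, fun j hj => ?_⟩⟩
    have hsub := cube_subset_cube s hB'.2
    exact (hBF j hj).imp hsub.trans hsub.trans

theorem isMetricOpen_setOf_exists_cube_rn_subset (B : Einf) (X : Set Einf) :
    IsMetricOpen {D | ∃ n, cube (rn D n) B ⊆ X} := by
  rintro C ⟨n, hn⟩
  refine ⟨C.mu n + 1, fun D hD => ⟨n, ?_⟩⟩
  rwa [rn_eq_of_approx_eq hD (Nat.lt_succ_self _)]

theorem IsRamsey.iUnion {X : ℕ → Set Einf} (hX : ∀ j, IsRamsey (X j)) : IsRamsey (⋃ j, X j) := by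
  refine cubeDense_of_initSeg fun s A hs => ?_
  obtain ⟨B, hB, hdec⟩ := (cubeDense_forall_subset_or_subset_compl
    (I := fun s => Set.Iic s.1) (fun s => Set.finite_Iic s.1) hX).exists_forall_le_fst
    (fun _ _ _ hST h j hj => (h j hj).imp hST.trans hST.trans) hs
  obtain ⟨B', hB', hO⟩ := (isMetricOpen_setOf_exists_cube_rn_subset B (⋃ j, X j)).isRamsey s B
    ⟨B, hB.1.self_mem_cube⟩
  refine ⟨B', cube_subset_cube s hB.2 hB', hO.imp (fun hO D hD => ?_) fun hO D hD hDX => hO hD ?_⟩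
  · obtain ⟨n, hn⟩ := hO hD
    exact hn ⟨⟨n, rfl⟩, hD.2.trans hB'.2⟩
  · obtain ⟨j, hj⟩ := Set.mem_iUnion.1 hDX
    obtain ⟨⟨q, rfl⟩, hDB'⟩ := hD
    let n := max q j
    have hDn : D ∈ cube (rn D n) B := ⟨⟨n, rfl⟩, hDB'.trans hB'.2⟩
    have hq : D.mu q ≤ D.mu n := D.strictMono_mu.monotone (le_max_left q j)
    have hjn : j ≤ D.mu n := (le_max_right q j).trans (D.le_mu n)
    rcases hdec (rn D n) hq ⟨D, hDn⟩ j hjn with h | h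
    · exact ⟨n, h.trans (Set.subset_iUnion X j)⟩
    · exact absurd hj (h hDn)

/-- The σ-algebra of Ramsey sets. -/
@[reducible]
def ramseyMeasurableSpace : MeasurableSpace Einf where
  MeasurableSet' := IsRamsey
  measurableSet_empty := isRamsey_empty
  measurableSet_compl _ h := h.compl
  measurableSet_iUnion _ h := IsRamsey.iUnion h

theorem isMetricOpen_setOf_toCS_eq_true (n m : ℕ) : IsMetricOpen {A | toCS A n m = true} :=
  fun A hA => ⟨max m (A.mu n) + 1, fun D hD => by
    have hmu : D.mu n = A.mu n := congrArg Sigma.fst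
      (rn_eq_of_approx_eq hD (Nat.lt_succ_of_le (le_max_right _ _)))
    have hrel := approx_eq_approx_iff.1 hD m (Nat.lt_succ_of_le (le_max_left _ _)) (A.mu n)
      (Nat.lt_succ_of_le (le_max_right _ _))
    simpa [toCS, hmu, hrel] using hA⟩

theorem measurable_toCS_ramseyMeasurableSpace : Measurable[ramseyMeasurableSpace] toCS := by
  refine (@measurable_pi_iff _ _ _ ramseyMeasurableSpace _ _).2 fun n =>
    (@measurable_pi_iff _ _ _ ramseyMeasurableSpace _ _).2 fun m => ?_
  exact @measurable_to_bool _ ramseyMeasurableSpace _ (isMetricOpen_setOf_toCS_eq_true n m).isRamsey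

theorem borel_le_ramseyMeasurableSpace :
    (inferInstance : MeasurableSpace Einf) ≤ ramseyMeasurableSpace :=
  measurable_toCS_ramseyMeasurableSpace.comap_le

theorem measurableSet_setOf_rel (i j : ℕ) : MeasurableSet {A : Einf | A.1 i j} := by
  have hrel : {A : Einf | A.1 i j} = ⋃ n, {A | toCS A n i = true} ∩ {A | toCS A n j = true} := by
    ext A
    simp only [toCS, decide_eq_true_eq, Set.mem_iUnion, Set.mem_inter_iff, Set.mem_ofPred_eq]
    refine ⟨fun h => ⟨A.idx j, ?_⟩, fun ⟨n, hi, hj⟩ => A.1.trans hi (A.1.symm hj)⟩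
    have hj : A.1 j (A.mu (A.idx j)) := A.mu_idx j ▸ A.1.symm (A.rel_rep j)
    exact ⟨A.1.trans h hj, hj⟩
  have htoCS : ∀ n m, MeasurableSet {A : Einf | toCS A n m = true} := fun n m =>
    measurableSet_eq_fun (measurable_pi_iff.1 (measurable_pi_iff.1 (comap_measurable toCS) n) m)
      measurable_const
  rw [hrel]
  exact .iUnion fun n => (htoCS n i).inter (htoCS n j)

/-! ### Traciality -/

/-- `f` is tracial at `B`: up to `μ_n(B)`, for large `n`, the value of `f` at a coarsening of `B`
is determined by the approximation of that coarsening with domain `{0,…,μ_n(B)−1}`. -/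
def IsTracialAt (f : Einf → Einf) (B : Einf) : Prop :=
  ∃ n₀ : ℕ, ∀ n ≥ n₀, ∀ A A' : Einf, Coarsen A B → Coarsen A' B →
    (∃ k : ℕ, A.mu k = B.mu n ∧ rn A k = rn A' k) → trace (f A) B n = trace (f A') B n

section Tracial

variable {f : Einf → Einf}

theorem cubeDense_forall_approx_eq (hf : Measurable[ramseyMeasurableSpace] f) :
    CubeDense fun s S => ∀ D ∈ S, ∀ D' ∈ S, (f D).approx s.1 = (f D').approx s.1 := by
  intro s A hne
  obtain ⟨B, hB, hdec⟩ := cubeDense_forall_subset_or_subset_compl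
    (I := fun s => Set.Iio s.1 ×ˢ Set.Iio s.1)
    (fun s => (Set.finite_Iio s.1).prod (Set.finite_Iio s.1))
    (X := fun p => f ⁻¹' {A | A.1 p.1 p.2}) (fun p => hf (measurableSet_setOf_rel p.1 p.2)) s A hne
  refine ⟨B, hB, fun D hD D' hD' => approx_eq_approx_iff.2 fun i hi j hj => ?_⟩
  rcases hdec (i, j) ⟨hi, hj⟩ with h | h
  · exact iff_of_true (h hD) (h hD')
  · exact iff_of_false (h hD) (h hD')

theorem ramseyConull_setOf_isTracialAt (hf : Measurable[ramseyMeasurableSpace] f) :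
    RamseyConull {B | IsTracialAt f B} := by
  rintro s A ⟨C, hC⟩
  obtain ⟨B, hB, happrox⟩ := (cubeDense_forall_approx_eq hf).exists_forall_le_fst
    (fun _ _ _ hST h D hD D' hD' => h D (hST hD) D' (hST hD')) hC.1
  refine ⟨B, cube_subset_cube s hC.2 hB, Set.disjoint_iff_inter_eq_empty.1 <|
    Set.disjoint_compl_right_iff_subset.2 fun E hE => ⟨s.1, ?_⟩⟩
  rintro n hn D D' hD hD' ⟨k, hk, hrn⟩
  have hDk : D ∈ cube (rn D k) B := ⟨⟨k, rfl⟩, hD.trans hE.2⟩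
  have hD'k : D' ∈ cube (rn D k) B := ⟨⟨k, hrn.symm⟩, hD'.trans hE.2⟩
  have hsk : s.1 ≤ D.mu k := hk ▸ hn.le.trans (E.le_mu n)
  exact trace_eq_trace_of_approx_eq (hk ▸ happrox (rn D k) hsk ⟨D, hDk⟩ D hDk D' hD'k)

end Tracial

end Einf

open scoped MeasureTheory in
theorem borel_maps_tracial_on_ramsey_conull_general
    (f : Einf → Einf) (hf : Measurable[ramseyMeasurableSpace] f) :
    ∃ C : Set Einf, RamseyConull C ∧ ∀ B ∈ C, IsTracialAt f B :=
  ⟨{B | IsTracialAt f B}, ramseyConull_setOf_isTracialAt hf, fun _ => id⟩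

/-- Lemma 5.2 (Traciality): every Borel map `f : 𝓔_∞ → 𝓔_∞` is tracial on some Ramsey
conull set `𝓒`: for every `B ∈ 𝓒` there is `n₀` so that for all `n ≥ n₀` and all
`A, A' ≤ B` admitting `k` and `s ∈ 𝓔_∞^fin` with `s = r_k(A) = r_k(A')` and
`dom(s) = {0,…,μ_n(B)−1}`, the traces `tr(f(A), B, n)` and `tr(f(A'), B, n)` agree. -/
theorem borel_maps_tracial_on_ramsey_conull
    (f : Einf → Einf) (hf : Measurable f) :
    ∃ C : Set Einf, RamseyConull C ∧
      ∀ B ∈ C, ∃ n₀ : ℕ, ∀ n ≥ n₀, ∀ A A' : Einf,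
        Coarsen A B → Coarsen A' B →
        (∃ k : ℕ, A.mu k = B.mu n ∧ rn A k = rn A' k) →
        Einf.trace (f A) B n = Einf.trace (f A') B n :=
  borel_maps_tracial_on_ramsey_conull_general f (hf.mono borel_le_ramseyMeasurableSpace le_rfl)
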